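/- Let A be a finite dimensional k-algebra such that M_n(A) is a Frobenius algebra for some positive integer n. Then A is a Frobenius algebra. -/

import Mathlib

/-- A finite dimensional `k`-algebra `R` is Frobenius if `R ≅ R* = Hom_k(R,k)` as left
`R`-modules, the left `R`-action on the dual being `(a • f) y = f (y * a)`. -/
def IsFrobeniusAlgebra (k R : Type*) [Field k] [Ring R] [Algebra k R] : Prop :=
  ∃ φ : R ≃ₗ[k] Module.Dual k R, ∀ a x y : R, φ (a * x) y = φ x (y * a)

/-!
Restricting scalars along `A → Mₙ(A)` turns an isomorphism `Mₙ(A) ≅ Mₙ(A)*` of left modules into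
an isomorphism `A ^ (n²) ≅ (A*) ^ (n²)`. Since `A` has finite length over itself, it remains to
extract roots: for `M` of finite length, `M ^ m ≅ N ^ m` forces `M ≅ N`. This follows by splitting
off from `M` a summand with local endomorphism ring, which is then also a summand of `N`, and
cancelling its powers.
-/

open LinearMap

/-- The linear version of `Equiv.arrowProdEquivProdArrow`: maps into a product are pairs of maps. -/
def piProdEquiv (R ι P Q : Type*) [Semiring R] [AddCommMonoid P] [Module R P] [AddCommMonoid Q]
    [Module R Q] : (ι → P × Q) ≃ₗ[R] (ι → P) × (ι → Q) where
  __ := Equiv.arrowProdEquivProdArrow ι (fun _ => P) (fun _ => Q)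
  map_add' _ _ := rfl
  map_smul' _ _ := rfl

section Splittings

variable {R P P' Z : Type*} [Ring R] [AddCommGroup P] [Module R P] [AddCommGroup P'] [Module R P']
  [AddCommGroup Z] [Module R Z]

theorem isCompl_range_ker_of_bijective_comp {i : P →ₗ[R] Z} {r : Z →ₗ[R] P'}
    (h : Function.Bijective (r ∘ₗ i)) : IsCompl (range i) (ker r) := by
  constructor
  · rw [Submodule.disjoint_def]
    rintro _ ⟨p, rfl⟩ hp
    rw [(injective_iff_map_eq_zero _).1 h.1 p hp, map_zero]
  · rw [codisjoint_iff, Submodule.eq_top_iff']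
    intro z
    obtain ⟨p, hp⟩ := h.2 (r z)
    refine Submodule.mem_sup.2 ⟨i p, mem_range_self i p, z - i p, ?_, add_sub_cancel _ _⟩
    rw [mem_ker, map_sub, ← hp, coe_comp, Function.comp_apply, sub_self]

theorem nonempty_linearEquiv_prod_ker_of_bijective_comp {i : P →ₗ[R] Z} {r : Z →ₗ[R] P'}
    (h : Function.Bijective (r ∘ₗ i)) : Nonempty (Z ≃ₗ[R] P × ker r) := by
  have injective_i : Function.Injective i := .of_comp (f := r) h.1
  exact ⟨((LinearEquiv.ofInjective i injective_i).prodCongr (.refl R _) ≪≫ₗ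
    Submodule.prodEquivOfIsCompl _ _ (isCompl_range_ker_of_bijective_comp h)).symm⟩

theorem nonempty_ker_linearEquiv_ker_of_bijective_comp {i : P →ₗ[R] Z} {r s : Z →ₗ[R] P'}
    (hr : Function.Bijective (r ∘ₗ i)) (hs : Function.Bijective (s ∘ₗ i)) :
    Nonempty (ker r ≃ₗ[R] ker s) :=
  ⟨(Submodule.quotientEquivOfIsCompl _ _ (isCompl_range_ker_of_bijective_comp hr)).symm ≪≫ₗ
    Submodule.quotientEquivOfIsCompl _ _ (isCompl_range_ker_of_bijective_comp hs)⟩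

theorem nonempty_ker_fst_comp_linearEquiv (e : Z ≃ₗ[R] P × P') :
    Nonempty (ker (fst R P P' ∘ₗ e.toLinearMap) ≃ₗ[R] P') := by
  have range_eq : range (e.symm.toLinearMap ∘ₗ inr R P P') = ker (fst R P P' ∘ₗ e.toLinearMap) := by
    rw [range_comp, ker_comp, ker_fst, Submodule.map_equiv_eq_comap_symm, LinearEquiv.symm_symm]
  exact ⟨(LinearEquiv.ofInjective (e.symm.toLinearMap ∘ₗ inr R P P')
    (e.symm.injective.comp inr_injective) ≪≫ₗ .ofEq _ _ range_eq).symm⟩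

end Splittings

section LocalEnd

variable {R P Z X Y N : Type*} [Ring R] [AddCommGroup P] [Module R P] [AddCommGroup Z] [Module R Z]
  [AddCommGroup X] [Module R X] [AddCommGroup Y] [Module R Y] [AddCommGroup N] [Module R N]
  [IsLocalRing (Module.End R P)]

theorem nonempty_ker_linearEquiv_ker_of_isLocalRing_end {r s : Z →ₗ[R] P} {i j : P →ₗ[R] Z}
    (hr : r ∘ₗ i = .id) (hs : s ∘ₗ j = .id) : Nonempty (ker r ≃ₗ[R] ker s) := by
  have isUnit_id : IsUnit (.id : Module.End R P) := isUnit_one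
  have bijective {f : Module.End R P} : IsUnit f → Function.Bijective f :=
    (Module.End.isUnit_iff f).1
  by_cases hsi : IsUnit (s ∘ₗ i : Module.End R P)
  · exact nonempty_ker_linearEquiv_ker_of_bijective_comp
      (bijective (hr ▸ isUnit_id)) (bijective hsi)
  by_cases hrj : IsUnit (r ∘ₗ j : Module.End R P)
  · exact nonempty_ker_linearEquiv_ker_of_bijective_comp
      (bijective hrj) (bijective (hs ▸ isUnit_id))
  -- Neither section works for both maps, but their sum does: `1 + nonunit` is a unit.
  have isUnit_id_add {f : Module.End R P} (hf : ¬ IsUnit f) : IsUnit (.id + f) :=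
    (IsLocalRing.isUnit_or_isUnit_of_add_one (add_neg_cancel_right 1 f)).resolve_right
      (hf ∘ (IsUnit.neg_iff f).1)
  refine nonempty_ker_linearEquiv_ker_of_bijective_comp (i := i + j) (bijective ?_) (bijective ?_)
  · rw [comp_add, hr]
    exact isUnit_id_add hrj
  · rw [comp_add, hs, add_comm]
    exact isUnit_id_add hsi

theorem nonempty_linearEquiv_of_prod_of_isLocalRing_end (e : (P × X) ≃ₗ[R] (P × Y)) :
    Nonempty (X ≃ₗ[R] Y) := by
  obtain ⟨eX⟩ := nonempty_ker_fst_comp_linearEquiv (.refl R (P × X))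
  obtain ⟨eY⟩ := nonempty_ker_fst_comp_linearEquiv e
  obtain ⟨f⟩ := nonempty_ker_linearEquiv_ker_of_isLocalRing_end
    (r := fst R P X ∘ₗ (LinearEquiv.refl R (P × X)).toLinearMap) (s := fst R P Y ∘ₗ e.toLinearMap)
    (i := inl R P X) (j := e.symm.toLinearMap ∘ₗ inl R P Y) (by ext; simp) (by ext; simp)
  exact ⟨eX.symm ≪≫ₗ f ≪≫ₗ eY⟩

theorem exists_linearEquiv_prod_of_pi_of_isLocalRing_end {ι : Type*} [Finite ι] {i : P →ₗ[R] ι → N}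
    {r : (ι → N) →ₗ[R] P} (h : r ∘ₗ i = .id) :
    ∃ N' : Submodule R N, Nonempty (N ≃ₗ[R] P × N') := by
  classical
  cases nonempty_fintype ι
  have sum_eq_one : ∑ j, ((r ∘ₗ single R _ j) ∘ₗ proj j ∘ₗ i : Module.End R P) = 1 := by
    refine Eq.trans ?_ h
    ext p
    simp [← map_sum, Finset.univ_sum_single]
  obtain ⟨j, -, hj⟩ := IsLocalRing.exists_of_isUnit_sum (sum_eq_one ▸ isUnit_one)
  exact ⟨_, nonempty_linearEquiv_prod_ker_of_bijective_comp ((Module.End.isUnit_iff _).1 hj)⟩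

end LocalEnd

section FiniteLength

universe u

variable {R : Type*} [Ring R]

theorem isLocalRing_end_of_indecomposable {P : Type*} [AddCommGroup P] [Module R P]
    [IsNoetherian R P] [IsArtinian R P] [Nontrivial P]
    (h : ∀ S T : Submodule R P, IsCompl S T → S = ⊥ ∨ T = ⊥) :
    IsLocalRing (Module.End R P) := by
  refine .of_isUnit_or_isUnit_one_sub_self fun f => ?_
  obtain ⟨n, hn⟩ := Filter.eventually_atTop.1 f.eventually_isCompl_ker_pow_range_pow
  obtain hker | hrange := h _ _ (hn (n + 1) n.le_succ)
  · left
    refine (isUnit_pow_succ_iff (n := n)).1 ((Module.End.isUnit_iff _).2 ?_)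
    exact IsArtinian.bijective_of_injective_endomorphism _ (ker_eq_bot.1 hker)
  · right
    exact IsNilpotent.isUnit_one_sub ⟨n + 1, range_eq_bot.1 hrange⟩

theorem isCompl_map_subtype_sup {M : Type*} [AddCommGroup M] [Module R M] {P Q : Submodule R M}
    (hPQ : IsCompl P Q) {S T : Submodule R P} (hST : IsCompl S T) :
    IsCompl (S.map P.subtype) (T.map P.subtype ⊔ Q) := by
  have sup_eq : S.map P.subtype ⊔ T.map P.subtype = P := by
    rw [← Submodule.map_sup, hST.sup_eq_top, Submodule.map_subtype_top]
  constructor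
  · refine Disjoint.disjoint_sup_right_of_disjoint_sup_left ?_ (sup_eq.symm ▸ hPQ.disjoint)
    exact Submodule.disjoint_map P.subtype_injective hST.disjoint
  · rw [codisjoint_iff, ← sup_assoc, sup_eq, hPQ.sup_eq_top]

theorem exists_isCompl_isLocalRing_end (M : Type*) [AddCommGroup M] [Module R M]
    [IsNoetherian R M] [IsArtinian R M] [Nontrivial M] :
    ∃ P Q : Submodule R M, IsCompl P Q ∧ IsLocalRing (Module.End R P) := by
  obtain ⟨P, ⟨P_ne_bot, Q, hPQ⟩, P_minimal⟩ := IsArtinian.set_has_minimal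
    {P : Submodule R M | P ≠ ⊥ ∧ ∃ Q, IsCompl P Q} ⟨⊤, top_ne_bot, ⊥, isCompl_top_bot⟩
  have : Nontrivial P := Submodule.nontrivial_iff_ne_bot.2 P_ne_bot
  refine ⟨P, Q, hPQ, isLocalRing_end_of_indecomposable fun S T hST => ?_⟩
  refine or_iff_not_imp_left.2 fun S_ne_bot => ?_
  have map_subtype_injective := Submodule.map_injective_of_injective P.subtype_injective
  have map_S_eq : S.map P.subtype = P := by
    refine (Submodule.map_subtype_le P S).eq_of_not_lt
      (P_minimal _ ⟨?_, _, isCompl_map_subtype_sup hPQ hST⟩)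
    rwa [Ne, ← Submodule.map_bot P.subtype, map_subtype_injective.eq_iff]
  have S_eq_top : S = ⊤ := map_subtype_injective (map_S_eq.trans P.map_subtype_top.symm)
  exact eq_bot_of_top_isCompl (S_eq_top ▸ hST)

theorem induction_on_isLocalRing_end
    {motive : ∀ (M : Type u) [AddCommGroup M] [Module R M], Prop}
    (subsingleton : ∀ (M : Type u) [AddCommGroup M] [Module R M] [Subsingleton M], motive M)
    (summand : ∀ (M P Q : Type u) [AddCommGroup M] [Module R M] [AddCommGroup P] [Module R P]
      [AddCommGroup Q] [Module R Q] [IsNoetherian R M] [IsArtinian R M]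
      [IsLocalRing (Module.End R P)], (M ≃ₗ[R] P × Q) → motive Q → motive M)
    (M : Type u) [AddCommGroup M] [Module R M] [IsNoetherian R M] [IsArtinian R M] : motive M := by
  induction hM : Module.length R M using WellFoundedLT.induction generalizing M with
  | ind l ih =>
  cases subsingleton_or_nontrivial M
  · exact subsingleton M
  obtain ⟨P, Q, hPQ, _⟩ := exists_isCompl_isLocalRing_end (R := R) M
  have Q_ne_top : Q ≠ ⊤ := by
    rintro rfl
    obtain rfl := eq_bot_of_isCompl_top hPQ
    exact false_of_nontrivial_of_subsingleton (Module.End R (⊥ : Submodule R M))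
  exact summand M P Q (Submodule.prodEquivOfIsCompl P Q hPQ).symm
    (ih _ (hM ▸ Submodule.length_lt Q_ne_top) Q rfl)

theorem nonempty_linearEquiv_of_prod {P X Y : Type*} [AddCommGroup P] [Module R P]
    [IsNoetherian R P] [IsArtinian R P] [AddCommGroup X] [Module R X] [AddCommGroup Y] [Module R Y]
    (e : (P × X) ≃ₗ[R] (P × Y)) : Nonempty (X ≃ₗ[R] Y) := by
  refine induction_on_isLocalRing_end (R := R)
    (motive := fun P _ _ => ((P × X) ≃ₗ[R] (P × Y)) → Nonempty (X ≃ₗ[R] Y)) ?_ ?_ P e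
  · intro P _ _ _ e
    have := uniqueOfSubsingleton (0 : P)
    exact ⟨LinearEquiv.uniqueProd.symm ≪≫ₗ e ≪≫ₗ LinearEquiv.uniqueProd⟩
  · intro P P₁ P₂ _ _ _ _ _ _ _ _ _ f ih e
    let fX := f.prodCongr (.refl R X) ≪≫ₗ LinearEquiv.prodAssoc R P₁ P₂ X
    let fY := f.prodCongr (.refl R Y) ≪≫ₗ LinearEquiv.prodAssoc R P₁ P₂ Y
    obtain ⟨e'⟩ := nonempty_linearEquiv_of_prod_of_isLocalRing_end (fX.symm ≪≫ₗ e ≪≫ₗ fY)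
    exact ih e'

theorem nonempty_linearEquiv_of_pi {ι M N : Type*} [Finite ι] [Nonempty ι] [AddCommGroup M]
    [Module R M] [IsNoetherian R M] [IsArtinian R M] [AddCommGroup N] [Module R N]
    (e : (ι → M) ≃ₗ[R] (ι → N)) : Nonempty (M ≃ₗ[R] N) := by
  refine induction_on_isLocalRing_end (R := R) (motive := fun M _ _ => ∀ (N : Type _)
    [AddCommGroup N] [Module R N], ((ι → M) ≃ₗ[R] (ι → N)) → Nonempty (M ≃ₗ[R] N)) ?_ ?_ M N e
  · intro M _ _ _ N _ _ e
    have : Subsingleton N :=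
      (Function.surjective_eval (Classical.arbitrary ι)).comp e.surjective |>.subsingleton
    exact ⟨0⟩
  · intro M P Q _ _ _ _ _ _ _ _ _ f ih N _ _ e
    classical
    obtain ⟨N', ⟨g⟩⟩ := exists_linearEquiv_prod_of_pi_of_isLocalRing_end
      (i := e.toLinearMap ∘ₗ single R _ (Classical.arbitrary ι) ∘ₗ f.symm.toLinearMap ∘ₗ inl R P Q)
      (r := fst R P Q ∘ₗ f.toLinearMap ∘ₗ proj (Classical.arbitrary ι) ∘ₗ e.symm.toLinearMap)
      (by ext; simp)
    have inl_injective : Function.Injective (f.symm.toLinearMap ∘ₗ inl R P Q) :=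
      f.symm.injective.comp LinearMap.inl_injective
    have : IsNoetherian R P := isNoetherian_of_injective _ inl_injective
    have : IsArtinian R P := isArtinian_of_injective _ inl_injective
    obtain ⟨e'⟩ := nonempty_linearEquiv_of_prod ((piProdEquiv R ι P Q).symm ≪≫ₗ
      (LinearEquiv.piCongrRight fun _ => f.symm) ≪≫ₗ e ≪≫ₗ
      (LinearEquiv.piCongrRight fun _ => g) ≪≫ₗ piProdEquiv R ι P N')
    obtain ⟨h⟩ := ih N' e'
    exact ⟨f ≪≫ₗ (LinearEquiv.refl R P).prodCongr h ≪≫ₗ g.symm⟩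

end FiniteLength

/-- The left `A`-module structure `(a • f) y = f (y * a)` on the dual of a `k`-algebra `A`, as in
the definition of a Frobenius algebra. It is only a local instance because for `A = k` a dual space
carries a module structure already. -/
abbrev dualLeftModule (k A : Type*) [CommSemiring k] [Semiring A] [Algebra k A] :
    Module A (Module.Dual k A) where
  smul a f := f ∘ₗ mulRight k a
  one_smul f := by ext y; exact congrArg f (mul_one y)
  mul_smul a b f := by ext y; exact congrArg f (mul_assoc y a b).symm
  smul_zero a := zero_comp _
  smul_add a f g := add_comp _ g f
  add_smul a b f := by ext y; exact (congrArg f (mul_add y a b)).trans (map_add f _ _)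
  zero_smul f := by ext y; exact (congrArg f (mul_zero y)).trans (map_zero f)

attribute [local instance] dualLeftModule

theorem dual_smul_apply {k A : Type*} [CommSemiring k] [Semiring A] [Algebra k A] (a : A)
    (f : Module.Dual k A) (y : A) : (a • f) y = f (y * a) :=
  rfl

section Dual

variable {k A : Type*} [Field k] [Ring A] [Algebra k A]

theorem isFrobeniusAlgebra_iff_nonempty_linearEquiv_dual :
    IsFrobeniusAlgebra k A ↔ Nonempty (A ≃ₗ[A] Module.Dual k A) := by
  have : IsScalarTower k A (Module.Dual k A) :=
    ⟨fun c a f => by ext y; simp [dual_smul_apply]⟩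
  constructor
  · rintro ⟨φ, hφ⟩
    exact ⟨{ φ with map_smul' := fun a x => LinearMap.ext (hφ a x) }⟩
  · rintro ⟨φ⟩
    exact ⟨φ.restrictScalars k, fun a x => LinearMap.congr_fun (φ.map_smul a x)⟩

theorem IsFrobeniusAlgebra.nonempty_pi_linearEquiv_pi_dual {ι : Type*} [Fintype ι] [DecidableEq ι]
    (h : IsFrobeniusAlgebra k (Matrix ι ι A)) :
    Nonempty ((ι × ι → A) ≃ₗ[A] (ι × ι → Module.Dual k A)) := by
  obtain ⟨φ, hφ⟩ := h
  let entries : (ι × ι → A) ≃ₗ[k] Matrix ι ι A :=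
    LinearEquiv.curry k A ι ι ≪≫ₗ Matrix.ofLinearEquiv k
  let ψ : (ι × ι → A) ≃ₗ[k] (ι × ι → Module.Dual k A) :=
    entries ≪≫ₗ φ ≪≫ₗ entries.dualMap ≪≫ₗ (LinearMap.lsum k (fun _ => A) k).symm
  have ψ_apply (v : ι × ι → A) (p : ι × ι) (y : A) :
      ψ v p y = φ (entries v) (entries (Pi.single p y)) := rfl
  refine ⟨{ ψ with map_smul' := fun a v => ?_ }⟩
  have entries_smul : entries (a • v) = Matrix.scalar ι a * entries v :=
    Matrix.smul_eq_diagonal_mul (entries v) a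
  ext p y
  have single_mul :
      entries (Pi.single p y) * Matrix.scalar ι a = entries (Pi.single p (y * a)) := by
    rw [Matrix.scalar_apply, ← Matrix.op_smul_eq_mul_diagonal, ← op_smul_eq_mul,
      Pi.single_smul]
    rfl
  change ψ (a • v) p y = ψ v p (y * a)
  rw [ψ_apply, ψ_apply, entries_smul, hφ, single_mul]

end Dual

/-- if `A` is a finite dimensional `k`-algebra such that `M_n(A)` is a
Frobenius algebra for some positive integer `n`, then `A` is a Frobenius algebra. -/
theorem frobenius_of_matrix_frobenius
    {k A : Type*} [Field k] [Ring A] [Algebra k A] [FiniteDimensional k A]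
    (n : ℕ) (hn : 0 < n)
    (h : IsFrobeniusAlgebra k (Matrix (Fin n) (Fin n) A)) :
    IsFrobeniusAlgebra k A := by
  have : Nonempty (Fin n) := ⟨⟨0, hn⟩⟩
  have : IsNoetherianRing A := .of_finite k A
  have : IsArtinianRing A := .of_finite k A
  obtain ⟨e⟩ := h.nonempty_pi_linearEquiv_pi_dual
  exact isFrobeniusAlgebra_iff_nonempty_linearEquiv_dual.2 (nonempty_linearEquiv_of_pi e)
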